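/- arXiv:2510.01422 — 2 statements merged into one kernel-verified Lean document; each statement's English description precedes it below -/
import Mathlib

section
/- A positive real number x belongs to ℤ[θ] if and only if x admits a finite greedy θ-expansion, i.e. there exist integers m ≤ M and an admissible sequence (b_m, …, b_M) such that x = Σ_{i=m}^{M} b_i θ^i. -/
/-!
Every finite sum `Σ b_i θ^i` lies in `ℤ[θ]` because `θ` is a unit of that ring.

For the converse, write `x = p + qθ` and `x' = p - q/θ`. The key fact (`exists_digits`) is a
cut-and-project description of the nonnegative θ-integers: if `0 ≤ x` and `-1 < x' < θ`, then
`x` has an admissible expansion with nonnegative exponents. The lowest digit `d` is read off from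
`x'`: the window `(-1, θ)` is cut at the points `k + 1/θ`, `0 ≤ k ≤ a - 1`, into the piece
`(-1, 1/θ)` of digit `0` and the pieces `(d - 1 + 1/θ, d + 1/θ)` of digits `1 ≤ d ≤ a`. The cut
points themselves are not attained, since `x' = k + 1/θ` means `x = k - θ < 0`. The quotient
`y = (x - d)/θ` is again nonnegative with `y'` in the window, and if `d ≠ 0` then `y' < θ - 1`,
which says exactly that the lowest digit of `y` is not `a`; so the digits produced are admissible.
The procedure stops because `x < θ^n` gives `y < θ^(n-1)`, and an element of the window with
`0 ≤ x < 1` is `0`.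

Finally, for an arbitrary positive `x ∈ ℤ[θ]`, the conjugate of `θ^N x` is `(-1/θ)^N x'`, which
lies in the window for large `N`; dividing the expansion of `θ^N x` by `θ^N` gives one of `x`.
-/

noncomputable section

/-- The real quadratic unit `θ = (a + √(a²+4))/2`, the positive root of `θ² = aθ + 1`
(the norm `N(θ) = −1` case). -/
def theta (a : ℕ) : ℝ := ((a : ℝ) + Real.sqrt ((a : ℝ) ^ 2 + 4)) / 2

/-- The Galois conjugate `θ' = −θ⁻¹`. -/
def thetaConj (a : ℕ) : ℝ := -(theta a)⁻¹

/-- Membership in the ring `ℤ[θ]`. -/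
def inOK (a : ℕ) (x : ℝ) : Prop := ∃ p q : ℤ, x = (p : ℝ) + (q : ℝ) * theta a

/-- A finite integer sequence, supported in `[m, M]`, is admissible (norm `−1` case) if all its
entries lie in `{0, …, a}` and an entry equal to `a` is always followed (below) by a `0`. -/
def AdmissibleOn (a : ℕ) (m M : ℤ) (b : ℤ → ℤ) : Prop :=
  (∀ i, b i ≠ 0 → m ≤ i ∧ i ≤ M) ∧
  (∀ i, 0 ≤ b i ∧ b i ≤ (a : ℤ)) ∧
  (∀ i, b i = (a : ℤ) → b (i - 1) = 0)

/-- The set `ℤ_θ` of θ-integers: signed sums `± Σ_{i=0}^{M} b_i θ^i` with `(b_i)` admissible. -/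
def Ztheta (a : ℕ) : Set ℝ :=
  { x | ∃ (ε : ℤ) (M : ℤ) (b : ℤ → ℤ), (ε = 1 ∨ ε = -1) ∧ 0 ≤ M ∧
      AdmissibleOn a 0 M b ∧
      x = (ε : ℝ) * ∑ i ∈ Finset.Icc (0 : ℤ) M, (b i : ℝ) * theta a ^ i }

/-- `v(x) = max { k : ℤ | x / θ^k ∈ ℤ_θ }` (as a supremum in `ℤ`). -/
def vval (a : ℕ) (x : ℝ) : ℤ := sSup { k : ℤ | x / theta a ^ k ∈ Ztheta a }

/-- The θ-adic infranorm `|x|_θ = θ^{−v(x)}`, with `|0|_θ = 0`. -/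
def thNorm (a : ℕ) (x : ℝ) : ℝ := if x = 0 then 0 else theta a ^ (-vval a x)

/-- A sequence in `ℝ` is `|·|_θ`-Cauchy. -/
def IsThCauchy (a : ℕ) (x : ℕ → ℝ) : Prop :=
  ∀ ε : ℝ, 0 < ε → ∃ N : ℕ, ∀ i j : ℕ, N ≤ i → N ≤ j → thNorm a (x i - x j) < ε

/-! ### The unit `θ` -/

section Theta

lemma theta_sq (a : ℕ) : theta a ^ 2 = a * theta a + 1 := by
  have h := Real.sq_sqrt (show (0 : ℝ) ≤ (a : ℝ) ^ 2 + 4 by positivity)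
  unfold theta
  linear_combination h / 4

lemma theta_pos (a : ℕ) : 0 < theta a := by
  have h : 0 < Real.sqrt ((a : ℝ) ^ 2 + 4) := Real.sqrt_pos.2 (by positivity)
  unfold theta
  positivity

lemma theta_inv (a : ℕ) : (theta a)⁻¹ = theta a - a := by
  have h := theta_pos a
  have h2 := theta_sq a
  rw [inv_eq_iff_eq_inv, eq_comm, inv_eq_of_mul_eq_one_right]
  linear_combination h2

lemma theta_gt (a : ℕ) : (a : ℝ) < theta a := by
  have h := inv_pos.2 (theta_pos a)
  rw [theta_inv] at h
  linarith

lemma one_lt_theta (a : ℕ) (ha : 1 ≤ a) : 1 < theta a := by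
  have h : (1 : ℝ) ≤ a := by exact_mod_cast ha
  linarith [theta_gt a]

end Theta

/-! ### Sums of powers of `θ` lie in `ℤ[θ]` -/

section Ring

lemma inOK_add {a : ℕ} {x y : ℝ} (hx : inOK a x) (hy : inOK a y) : inOK a (x + y) := by
  obtain ⟨p, q, rfl⟩ := hx
  obtain ⟨r, s, rfl⟩ := hy
  exact ⟨p + r, q + s, by push_cast; ring⟩

lemma inOK_int_mul {a : ℕ} {x : ℝ} (k : ℤ) (hx : inOK a x) : inOK a (k * x) := by
  obtain ⟨p, q, rfl⟩ := hx
  exact ⟨k * p, k * q, by push_cast; ring⟩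

lemma inOK_zpow (a : ℕ) (i : ℤ) : inOK a (theta a ^ i) := by
  have h0 := (theta_pos a).ne'
  have hsq := theta_sq a
  induction i using Int.induction_on with
  | zero => exact ⟨1, 0, by simp⟩
  | succ n ih =>
    obtain ⟨p, q, h⟩ := ih
    refine ⟨q, p + a * q, ?_⟩
    rw [zpow_add_one₀ h0, h]
    push_cast
    linear_combination (q : ℝ) * hsq
  | pred n ih =>
    obtain ⟨p, q, h⟩ := ih
    refine ⟨q - a * p, p, ?_⟩
    rw [zpow_sub_one₀ h0, h, theta_inv]
    push_cast
    linear_combination (q : ℝ) * hsq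

lemma inOK_sum (a : ℕ) (s : Finset ℤ) (b : ℤ → ℤ) :
    inOK a (∑ i ∈ s, (b i : ℝ) * theta a ^ i) := by
  induction s using Finset.induction_on with
  | empty => exact ⟨0, 0, by simp⟩
  | insert i s hi ih =>
    rw [Finset.sum_insert hi]
    exact inOK_add (inOK_int_mul _ (inOK_zpow a i)) ih

end Ring

/-! ### The nonnegative elements with conjugate in the window `(-1, θ)` -/

section Window

/-- `1/θ` is irrational: otherwise `a² + 4` would be a perfect square. -/
lemma eq_zero_of_eq_mul_inv (a : ℕ) (ha : 1 ≤ a) (u v : ℤ)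
    (h : (u : ℝ) = v * (theta a - a)) : v = 0 := by
  by_contra hv
  have hsq := theta_sq a
  have h1 : (2 * u + a * v) ^ 2 = ((a : ℤ) ^ 2 + 4) * v ^ 2 := by
    have : (2 * (u : ℝ) + a * v) ^ 2 = ((a : ℝ) ^ 2 + 4) * v ^ 2 := by
      rw [h]
      linear_combination 4 * (v : ℝ) ^ 2 * hsq
    exact_mod_cast this
  have h2 : v ∣ 2 * u + a * v :=
    (Int.pow_dvd_pow_iff two_ne_zero).1 ⟨(a : ℤ) ^ 2 + 4, by rw [h1]; ring⟩
  obtain ⟨c, hc⟩ := h2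
  rw [hc] at h1
  have h3 : c ^ 2 = (a : ℤ) ^ 2 + 4 := by
    have hv2 : v ^ 2 ≠ 0 := pow_ne_zero 2 hv
    apply mul_left_cancel₀ hv2
    linear_combination h1
  rw [← sq_abs] at h3
  have ha' : (1 : ℤ) ≤ a := by exact_mod_cast ha
  have hc0 := abs_nonneg c
  have h4 : (a : ℤ) < |c| := by nlinarith
  -- `c² - a² = 4` with `c > a ≥ 1`: the gap `c = a + 1` is excluded by parity, and a larger one
  -- gives `c² - a² ≥ 4a + 4`.
  rcases eq_or_lt_of_le (Int.add_one_le_of_lt h4) with h5 | h5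
  · rw [← h5] at h3
    have : 2 * (a : ℤ) + 1 = 4 := by linear_combination h3
    omega
  · have h6 : (a : ℤ) + 2 ≤ |c| := by omega
    nlinarith

/-- The lowest digit of `x = p + qθ ≥ 0` when `1/θ ≤ x' < θ`: it is the integer `d` with
`d - 1 + 1/θ < x' < d + 1/θ`. Here `1/θ` is written as `θ - a`, so that `x' = p - q (θ - a)`. -/
lemma exists_digit (a : ℕ) (ha : 1 ≤ a) (p q : ℤ) (hx : 0 ≤ (p : ℝ) + q * theta a)
    (hlo : theta a - a ≤ (p : ℝ) - q * (theta a - a))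
    (hhi : (p : ℝ) - q * (theta a - a) < theta a) :
    ∃ d : ℤ, 1 ≤ d ∧ d ≤ a ∧ -1 + (theta a - a) < (p : ℝ) - q * (theta a - a) - d ∧
      (p : ℝ) - q * (theta a - a) - d < theta a - a := by
  have hirr := eq_zero_of_eq_mul_inv a ha
  have hta := theta_gt a
  set t := theta a
  set w : ℝ := (p : ℝ) - q * (t - a) with hw
  have hf1 : ((⌊w - (t - a)⌋ : ℤ) : ℝ) ≤ w - (t - a) := Int.floor_le _
  have hf2 : w - (t - a) < ((⌊w - (t - a)⌋ : ℤ) : ℝ) + 1 := Int.lt_floor_add_one _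
  have hf0 : 0 ≤ ⌊w - (t - a)⌋ := Int.floor_nonneg.2 (by linarith)
  set k : ℤ := ⌊w - (t - a)⌋
  have hkaR : (k : ℝ) < a := by linarith
  have hka : k < a := by exact_mod_cast hkaR
  refine ⟨k + 1, by omega, by omega, ?_, by push_cast; linarith⟩
  rcases hf1.lt_or_eq with h | h
  · push_cast; linarith
  · exfalso
    -- By irrationality, `x' = k + 1/θ` forces `x = k - θ`, which is negative.
    have h1 : ((p - k : ℤ) : ℝ) = ((q + 1 : ℤ) : ℝ) * (t - a) := by
      push_cast
      linear_combination -h - hw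
    have h2 := hirr _ _ h1
    rw [h2] at h1
    have hq : (q : ℝ) = -1 := by
      have : q = -1 := by omega
      exact_mod_cast this
    push_cast at h1
    rw [hq] at hx
    linarith

/-- A nonnegative `x = p + qθ < θ^n` whose conjugate `x' = p - q (θ - a)` lies in `(-1, θ)` has an
admissible expansion with exponents in `[0, n)`; its lowest digit is `a` only if `x' ≥ θ - 1`. -/
lemma exists_digits (a : ℕ) (ha : 1 ≤ a) (n : ℕ) : ∀ p q : ℤ,
    0 ≤ (p : ℝ) + q * theta a → (p : ℝ) + q * theta a < theta a ^ n →
    -1 < (p : ℝ) - q * (theta a - a) → (p : ℝ) - q * (theta a - a) < theta a →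
    ∃ b : ℕ → ℤ, (∀ i, 0 ≤ b i ∧ b i ≤ a) ∧ (∀ i, b (i + 1) = a → b i = 0) ∧
      (∀ i, n ≤ i → b i = 0) ∧
      (b 0 = a → theta a - 1 ≤ (p : ℝ) - q * (theta a - a)) ∧
      (p : ℝ) + q * theta a = ∑ i ∈ Finset.range n, (b i : ℝ) * theta a ^ i := by
  have hta := theta_gt a
  have hsq := theta_sq a
  have ht1 := one_lt_theta a ha
  have hdig := exists_digit a ha
  have haR : (1 : ℝ) ≤ a := by exact_mod_cast ha
  set t := theta a
  have hinv : t * (t - a) = 1 := by linear_combination hsq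
  induction n with
  | zero =>
    intro p q hx hxn hlo hhi
    rw [pow_zero] at hxn
    -- `x - x' = q (θ + 1/θ)` lies in `(-θ, 2)`, so `q = 0` and `x` is an integer in `[0, 1)`.
    have hq : q = 0 := by
      have h2 : 2 ≤ t + (t - a) := by nlinarith [sq_nonneg (t - 1)]
      have h3 : (q : ℝ) < 1 := by nlinarith
      have h4 : (-1 : ℝ) < q := by nlinarith
      have h3' : q < 1 := by exact_mod_cast h3
      have h4' : -1 < q := by exact_mod_cast h4
      omega
    subst hq
    have hp : p = 0 := by
      norm_num at hx hxn
      have h3' : p < 1 := by exact_mod_cast hxn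
      omega
    subst hp
    refine ⟨fun _ => 0, fun i => ⟨le_rfl, by positivity⟩, fun _ _ => rfl, fun _ _ => rfl, ?_,
      by simp⟩
    intro h
    have h0 : (0 : ℤ) = a := h
    omega
  | succ n ih =>
    intro p q hx hxn hlo hhi
    obtain ⟨d, hd0, hda, hnn, hlo', hhi', hv, htop⟩ : ∃ d : ℤ, 0 ≤ d ∧ d ≤ a ∧
        0 ≤ (p : ℝ) - d + q * t ∧ -1 < (p : ℝ) - q * (t - a) - d ∧
        (p : ℝ) - q * (t - a) - d < t - a ∧
        (d ≠ 0 → -1 + (t - a) < (p : ℝ) - q * (t - a) - d) ∧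
        (d = a → t - 1 ≤ (p : ℝ) - q * (t - a)) := by
      by_cases hsmall : (p : ℝ) - q * (t - a) < t - a
      · refine ⟨0, le_rfl, by positivity, by push_cast; linarith, by push_cast; linarith,
          by push_cast; linarith, fun h => absurd rfl h, fun h => ?_⟩
        omega
      · obtain ⟨d, hd1, hda, h1, h2⟩ := hdig p q hx (not_lt.1 hsmall) hhi
        have hdaR : (d : ℝ) ≤ a := by exact_mod_cast hda
        refine ⟨d, by omega, hda, ?_, by linarith, h2, fun _ => h1, fun h => ?_⟩
        · -- If `z = x - d` were negative, `z - z' = q (θ + 1/θ)` would give `q = 0`, and then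
          -- `z = z'` would be an integer in `(-1, 0)`.
          by_contra hneg
          push Not at hneg
          have h3 : (q : ℝ) < 1 := by nlinarith
          have h4 : (-1 : ℝ) < q := by nlinarith
          have h3' : q < 1 := by exact_mod_cast h3
          have h4' : -1 < q := by exact_mod_cast h4
          have hq : q = 0 := by omega
          subst hq
          norm_num at hneg h1
          have h5 : p < d := by exact_mod_cast hneg
          have h6 : p + 1 ≤ d := by omega
          have h7 : (p : ℝ) + 1 ≤ d := by exact_mod_cast h6
          linarith
        · have : (d : ℝ) = a := by exact_mod_cast h
          linarith
    -- The coordinates of `y = (x - d)/θ`, whose conjugate is `-θ (x' - d)`.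
    have hy : ((q - a * (p - d) : ℤ) : ℝ) + ((p - d : ℤ) : ℝ) * t
        = (t - a) * ((p : ℝ) - d + q * t) := by
      push_cast
      linear_combination -(q : ℝ) * hinv
    have hy' : ((q - a * (p - d) : ℤ) : ℝ) - ((p - d : ℤ) : ℝ) * (t - a)
        = -t * ((p : ℝ) - q * (t - a) - d) := by
      push_cast
      linear_combination -(q : ℝ) * hinv
    have hs : 0 < t - a := by linarith
    have hd0R : (0 : ℝ) ≤ d := by exact_mod_cast hd0
    obtain ⟨b, hb1, hb2, hb3, hb4, hb5⟩ := ih (q - a * (p - d)) (p - d)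
      (by rw [hy]; positivity)
      (by
        rw [hy]
        have h1 : (t - a) * ((p : ℝ) - d + q * t) < (t - a) * t ^ (n + 1) :=
          mul_lt_mul_of_pos_left (by linarith) hs
        have h2 : (t - a) * t ^ (n + 1) = t ^ n := by
          rw [pow_succ]
          linear_combination t ^ n * hinv
        linarith)
      (by rw [hy']; nlinarith) (by rw [hy']; nlinarith)
    refine ⟨fun i => Nat.casesOn i d b, ?_, ?_, ?_, htop, ?_⟩
    · rintro (_ | i)
      · exact ⟨hd0, hda⟩
      · exact hb1 i
    · rintro (_ | i) h
      · by_contra hd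
        have h1 := hb4 h
        rw [hy'] at h1
        have h2 := hv hd
        nlinarith
      · exact hb2 i h
    · rintro (_ | i) h
      · omega
      · exact hb3 i (by omega)
    · rw [Finset.sum_range_succ']
      have h1 : ∑ i ∈ Finset.range n, (b i : ℝ) * t ^ (i + 1)
          = t * ∑ i ∈ Finset.range n, (b i : ℝ) * t ^ i := by
        rw [Finset.mul_sum]
        exact Finset.sum_congr rfl fun i _ => by ring
      change _ = ∑ i ∈ Finset.range n, (b i : ℝ) * t ^ (i + 1) + (d : ℝ) * t ^ 0
      rw [h1, ← hb5, hy]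
      linear_combination -((p : ℝ) - d + q * t) * hinv

end Window

/-! ### Reduction to the window -/

/-- Multiplication by `θ^N` multiplies the conjugate by `(-1/θ)^N`. -/
lemma exists_coords_pow_mul (a : ℕ) (p q : ℤ) (N : ℕ) : ∃ P Q : ℤ,
    (P : ℝ) + Q * theta a = theta a ^ N * (p + q * theta a) ∧
    (P : ℝ) - Q * (theta a - a) = (-(theta a - a)) ^ N * (p - q * (theta a - a)) := by
  have hsq := theta_sq a
  induction N with
  | zero => exact ⟨p, q, by simp, by simp⟩
  | succ N ih =>
    obtain ⟨P, Q, h1, h2⟩ := ih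
    refine ⟨Q, P + a * Q, ?_, ?_⟩
    · rw [pow_succ', mul_assoc, ← h1]
      push_cast
      linear_combination -(Q : ℝ) * hsq
    · rw [pow_succ', mul_assoc, ← h2]
      push_cast
      linear_combination -(Q : ℝ) * hsq

/-- A positive real `x` belongs to `ℤ[θ]` iff it admits a finite greedy
θ-expansion: there are `m ≤ M` and an admissible sequence `(b_m, …, b_M)` with
`x = Σ_{i=m}^{M} b_i θ^i`. -/
theorem finite_greedy_expansion_iff_mem (a : ℕ) (ha : 1 ≤ a) (x : ℝ) (hx : 0 < x) :
    inOK a x ↔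
      ∃ (m M : ℤ) (b : ℤ → ℤ), m ≤ M ∧ AdmissibleOn a m M b ∧
        x = ∑ i ∈ Finset.Icc m M, (b i : ℝ) * theta a ^ i := by
  constructor
  · rintro ⟨p, q, hpq⟩
    have ht1 := one_lt_theta a ha
    have ht0 := theta_pos a
    have hinv := theta_inv a
    have hs0 : 0 < theta a - a := sub_pos.2 (theta_gt a)
    have hs1 : theta a - a < 1 := hinv ▸ inv_lt_one_of_one_lt₀ ht1
    -- `N` is chosen so that the conjugate of `θ^N x` has absolute value less than `1`.
    obtain ⟨N, hN⟩ : ∃ N : ℕ, |(-(theta a - a)) ^ N * ((p : ℝ) - q * (theta a - a))| < 1 := by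
      have h : Filter.Tendsto
          (fun N : ℕ => |(-(theta a - a)) ^ N * ((p : ℝ) - q * (theta a - a))|)
          Filter.atTop (nhds 0) := by
        have h1 := (tendsto_pow_atTop_nhds_zero_of_abs_lt_one (r := -(theta a - a))
          (by rw [abs_neg, abs_of_pos hs0]; exact hs1)).mul_const
            ((p : ℝ) - q * (theta a - a))
        simpa using h1.abs
      exact (h.eventually (gt_mem_nhds one_pos)).exists
    obtain ⟨P, Q, h1, h2⟩ := exists_coords_pow_mul a p q N
    rw [← h2, abs_lt] at hN
    rw [← hpq] at h1
    obtain ⟨n, hn⟩ := pow_unbounded_of_one_lt ((P : ℝ) + Q * theta a) ht1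
    obtain ⟨b, hb1, hb2, hb3, -, hb5⟩ :=
      exists_digits a ha n P Q (by rw [h1]; positivity) hn hN.1 (hN.2.trans ht1)
    refine ⟨-N, n - N, fun i => if 0 ≤ i + N then b (i + N).toNat else 0, by omega,
      ⟨?_, ?_, ?_⟩, ?_⟩
    · intro i hi
      dsimp only at hi
      split_ifs at hi with h
      · refine ⟨by omega, ?_⟩
        by_contra hlt
        exact hi (hb3 _ (by omega))
      · exact absurd rfl hi
    · intro i
      dsimp only
      split_ifs
      · exact hb1 _
      · exact ⟨le_rfl, by positivity⟩
    · intro i hi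
      dsimp only at hi ⊢
      split_ifs with h
      · rw [if_pos (by omega)] at hi
        apply hb2
        rw [← hi]
        congr 1
        omega
      · rfl
    · have hsum : ∑ i ∈ Finset.Icc (-(N : ℤ)) (n - N),
          (((if 0 ≤ i + N then b (i + N).toNat else 0 : ℤ)) : ℝ) * theta a ^ i
          = ∑ j ∈ Finset.range (n + 1), (b j : ℝ) * theta a ^ ((j : ℤ) - N) := by
        symm
        refine Finset.sum_bij (fun (j : ℕ) _ => (j : ℤ) - N) ?_ ?_ ?_ ?_
        · intro j hj
          rw [Finset.mem_range] at hj
          rw [Finset.mem_Icc]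
          omega
        · intro j _ k _ h
          omega
        · intro i hi
          rw [Finset.mem_Icc] at hi
          refine ⟨(i + N).toNat, ?_, by omega⟩
          rw [Finset.mem_range]
          omega
        · intro j _
          rw [if_pos (by omega), show ((j : ℤ) - N + N).toNat = j by omega]
      rw [hsum, Finset.sum_range_succ, hb3 n le_rfl, Int.cast_zero, zero_mul, add_zero]
      have h3 : ∀ j ∈ Finset.range n, (b j : ℝ) * theta a ^ ((j : ℤ) - N)
          = (b j : ℝ) * theta a ^ j / theta a ^ N := by
        intro j _
        rw [zpow_sub₀ ht0.ne', zpow_natCast, zpow_natCast, mul_div_assoc]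
      rw [Finset.sum_congr rfl h3, ← Finset.sum_div, ← hb5, h1]
      field_simp
  · rintro ⟨m, M, b, -, -, rfl⟩
    exact inOK_sum a _ b
end
end

section
/- Reverse infratriangle inequality (norm −1 case): let α, β ∈ ℤ[θ] with α ≠ 0. If θ²·|β|_θ < |α|_θ, then |α|_θ − |β|_θ ≤ |α|_θ ≤ θ²·|α − β|_θ. -/
/-!
Write `x'` for the Galois conjugate of `x ∈ ℤ[θ]`. The θ-integers form a cut-and-project set:
a nonnegative `x ∈ ℤ[θ]` is a θ-integer if and only if `-1 < x' < θ` (`mem_Ztheta_iff`).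

* Since `θ' = -1/θ`, the digit conditions bound the conjugate of an admissible sum
  (`window_of_admissible`): a lowest digit equal to `a` forces `x' > θ - 1`, a smaller one forces
  `x' < θ - 1`.
* Conversely, the digits of `x` can be read off from `x'`, lowest digit first
  (`exists_admissible`): the digit `d` is `0` if `x' < 1/θ`, and otherwise `d ≥ 1` is determined by
  `d - 1 + 1/θ < x' < d + 1/θ`. In both cases `(x - d)/θ` is again nonnegative with conjugate in
  the window, and if `d ≠ 0` its conjugate is below `θ - 1`, so that its lowest digit is not `a`.

The characterization shows that the maximum defining `v` exists, that `x / θ ^ k ∈ ℤ_θ` for every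
`k ≤ v(x)`, and that `x, y ∈ ℤ_θ` implies `θ² (x + y) ∈ ℤ_θ` (`add_mem_Ztheta`), because the
sum of two windows shrinks into the window after division by `θ²`. If now `v(β) ≥ v(α) + 3` and
`v(α - β) ≥ v(α) + 3`, then `α = β + (α - β)` would satisfy `v(α) ≥ v(α) + 1`.
-/

noncomputable section

lemma theta_gt_one {a : ℕ} (ha : 1 ≤ a) : 1 < theta a := by
  have := theta_gt a
  have : (1 : ℝ) ≤ a := by exact_mod_cast ha
  linarith

lemma theta_irrational {a : ℕ} (ha : 1 ≤ a) : Irrational (theta a) := by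
  have h : Irrational (Real.sqrt ((a ^ 2 + 4 : ℕ) : ℝ)) := by
    rw [irrational_sqrt_natCast_iff]
    rintro ⟨r, hr⟩
    -- `a² < r² < (a + 2)²` leaves only `r = a + 1`, excluded by parity.
    have h1 : a < r := by nlinarith
    have h2 : r < a + 2 := by nlinarith
    have h3 : r = a + 1 := by omega
    subst h3
    have : 2 * a + 1 = 4 := by nlinarith
    omega
  have h2 := (h.natCast_add a).div_natCast (m := 2) (by norm_num)
  unfold theta
  push_cast at h2
  exact h2

/-! ### Galois conjugation -/

/-- `IsGalConj a x x'` says that `x ∈ ℤ[θ]` and that `x'` is its Galois conjugate. -/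
def IsGalConj (a : ℕ) (x x' : ℝ) : Prop :=
  ∃ p q : ℤ, x = p + q * theta a ∧ x' = p + q * thetaConj a

lemma thetaConj_eq (a : ℕ) : thetaConj a = a - theta a := by
  rw [thetaConj, theta_inv]
  ring

lemma IsGalConj.unique {a : ℕ} (ha : 1 ≤ a) {x y z : ℝ} (hy : IsGalConj a x y)
    (hz : IsGalConj a x z) :
    y = z := by
  obtain ⟨p, q, h1, rfl⟩ := hy
  obtain ⟨r, s, h2, rfl⟩ := hz
  have key : ((q - s : ℤ) : ℝ) * theta a = ((r - p : ℤ) : ℝ) := by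
    push_cast
    linarith
  by_cases hqs : q - s = 0
  · have hqs' : q = s := by omega
    subst hqs'
    have : (p : ℝ) = r := by linarith
    rw [this]
  · exact absurd key (((theta_irrational ha).intCast_mul hqs).ne_int _)

lemma IsGalConj.intCast (a : ℕ) (n : ℤ) : IsGalConj a n n := ⟨n, 0, by simp, by simp⟩

lemma IsGalConj.zero (a : ℕ) : IsGalConj a 0 0 := by simpa using IsGalConj.intCast a 0

lemma IsGalConj.add {a : ℕ} {x x' y y' : ℝ} (hx : IsGalConj a x x') (hy : IsGalConj a y y') :
    IsGalConj a (x + y) (x' + y') := by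
  obtain ⟨p, q, rfl, rfl⟩ := hx
  obtain ⟨r, s, rfl, rfl⟩ := hy
  exact ⟨p + r, q + s, by push_cast; ring, by push_cast; ring⟩

lemma IsGalConj.neg {a : ℕ} {x x' : ℝ} (hx : IsGalConj a x x') : IsGalConj a (-x) (-x') := by
  obtain ⟨p, q, rfl, rfl⟩ := hx
  exact ⟨-p, -q, by push_cast; ring, by push_cast; ring⟩

lemma IsGalConj.theta_mul {a : ℕ} {x x' : ℝ} (hx : IsGalConj a x x') :
    IsGalConj a (theta a * x) (thetaConj a * x') := by
  obtain ⟨p, q, rfl, rfl⟩ := hx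
  refine ⟨q, p + a * q, ?_, ?_⟩
  · push_cast
    linear_combination (q : ℝ) * theta_sq a
  · rw [thetaConj_eq]
    push_cast
    linear_combination (q : ℝ) * theta_sq a

lemma thetaConj_ne (a : ℕ) : thetaConj a ≠ 0 :=
  neg_ne_zero.2 (inv_ne_zero (theta_pos a).ne')

lemma IsGalConj.div_theta {a : ℕ} {x x' : ℝ} (hx : IsGalConj a x x') :
    IsGalConj a (x / theta a) (x' / thetaConj a) := by
  -- Division by `θ` is multiplication by `θ - a`.
  have e1 : x / theta a = theta a * x + -(a * x) := by
    rw [div_eq_mul_inv, theta_inv]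
    ring
  have e2 : x' / thetaConj a = thetaConj a * x' + -(a * x') := by
    rw [div_eq_iff (thetaConj_ne a), thetaConj_eq]
    linear_combination -x' * theta_sq a
  have hax : IsGalConj a (a * x) (a * x') := by
    obtain ⟨p, q, rfl, rfl⟩ := hx
    exact ⟨a * p, a * q, by push_cast; ring, by push_cast; ring⟩
  rw [e1, e2]
  exact hx.theta_mul.add hax.neg

lemma IsGalConj.div_zpow {a : ℕ} {x x' : ℝ} (hx : IsGalConj a x x') (k : ℤ) :
    IsGalConj a (x / theta a ^ k) (x' / thetaConj a ^ k) := by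
  have h1 := (theta_pos a).ne'
  have h2 := thetaConj_ne a
  induction k with
  | zero => simpa using hx
  | succ n ih =>
    rw [zpow_add_one₀ h1, zpow_add_one₀ h2, ← div_div, ← div_div]
    exact ih.div_theta
  | pred n ih =>
    rw [zpow_sub_one₀ h1, zpow_sub_one₀ h2]
    have := ih.theta_mul
    convert this using 1 <;> field_simp

/-- A nonzero element has nonzero conjugate. -/
lemma IsGalConj.ne_zero {a : ℕ} (ha : 1 ≤ a) {x x' : ℝ} (hx : IsGalConj a x x') (h0 : x ≠ 0) :
    x' ≠ 0 := by
  rintro rfl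
  obtain ⟨p, q, rfl, h⟩ := hx
  rw [thetaConj_eq] at h
  by_cases hq : q = 0
  · subst hq
    simp at h h0
    exact h0 (by exact_mod_cast h.symm)
  · refine ((theta_irrational ha).intCast_mul hq).ne_int (p + q * a) ?_
    push_cast
    linarith

/-- If `|x - x'| < θ + 1/θ`, then `x` is a rational integer. -/
lemma IsGalConj.eq_intCast {a : ℕ} {x x' : ℝ} (hx : IsGalConj a x x')
    (h1 : x - x' < theta a + (theta a)⁻¹) (h2 : -(theta a + (theta a)⁻¹) < x - x') :
    ∃ n : ℤ, x = n := by
  obtain ⟨p, q, rfl, rfl⟩ := hx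
  have hpos : 0 < theta a + (theta a)⁻¹ := by
    have := theta_pos a
    positivity
  have e : (p + q * theta a : ℝ) - (p + q * thetaConj a) = q * (theta a + (theta a)⁻¹) := by
    rw [thetaConj]
    ring
  rw [e] at h1 h2
  have hq1 : (q : ℝ) < 1 := by nlinarith
  have hq2 : (-1 : ℝ) < q := by nlinarith
  have hq1' : q < 1 := by exact_mod_cast hq1
  have hq2' : -1 < q := by exact_mod_cast hq2
  have : q = 0 := by omega
  exact ⟨p, by simp [this]⟩

/-! ### Admissible sums and the conjugate window -/

/-- The value `Σ_{i=0}^{n} b_i θ^i`, with natural-number exponents. -/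
def digitSum (a : ℕ) (n : ℕ) (b : ℤ → ℤ) : ℝ :=
  ∑ i ∈ Finset.range (n + 1), (b (i : ℤ) : ℝ) * theta a ^ i

lemma sum_Icc_eq_digitSum (a n : ℕ) (b : ℤ → ℤ) :
    ∑ i ∈ Finset.Icc (0 : ℤ) n, (b i : ℝ) * theta a ^ i = digitSum a n b := by
  unfold digitSum
  symm
  refine Finset.sum_bij (fun i _ => (i : ℤ)) ?_ ?_ ?_ ?_
  · intro i hi
    simp at hi ⊢
    omega
  · intro i _ j _ h
    exact_mod_cast h
  · intro j hj
    simp at hj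
    exact ⟨j.toNat, by simp; omega, by simp; omega⟩
  · intro i _
    simp

lemma digitSum_succ (a n : ℕ) (b c : ℤ → ℤ) (h : ∀ i : ℕ, c i = b (i + 1)) :
    digitSum a (n + 1) b = b 0 + theta a * digitSum a n c := by
  unfold digitSum
  rw [Finset.sum_range_succ', Finset.mul_sum, add_comm]
  congr 1
  · simp
  · refine Finset.sum_congr rfl fun i _ => ?_
    rw [h]
    push_cast
    ring

lemma digitSum_nonneg {a n : ℕ} {b : ℤ → ℤ} (hb : AdmissibleOn a 0 n b) : 0 ≤ digitSum a n b := by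
  refine Finset.sum_nonneg fun i _ => mul_nonneg ?_ (pow_nonneg (theta_pos a).le _)
  exact_mod_cast (hb.2.1 i).1

/-- One step of the window estimate: prepending a digit `d` to a number with conjugate `y'`. -/
lemma window_step {a : ℕ} (ha : 1 ≤ a) {d e : ℤ} {y' : ℝ} (hd0 : 0 ≤ d) (hda : d ≤ a)
    (hea : e ≤ a) (hde : e = a → d = 0)
    (h1 : -1 < y') (h2 : y' < theta a) (h3 : e < a → y' < theta a - 1) :
    -1 < d + thetaConj a * y' ∧ d + thetaConj a * y' < theta a ∧
      (d = a → theta a - 1 < d + thetaConj a * y') ∧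
      (d < a → d + thetaConj a * y' < theta a - 1) := by
  have hθ := theta_pos a
  have hi : 0 < (theta a)⁻¹ := inv_pos.2 hθ
  have hinv := theta_inv a
  have hm : (theta a)⁻¹ * theta a = 1 := inv_mul_cancel₀ hθ.ne'
  have hd0' : (0 : ℝ) ≤ d := by exact_mod_cast hd0
  have hda' : (d : ℝ) ≤ a := by exact_mod_cast hda
  rw [thetaConj]
  have hl : (theta a)⁻¹ * y' < 1 := by nlinarith
  have hu : -(theta a)⁻¹ < (theta a)⁻¹ * y' := by nlinarith
  refine ⟨by nlinarith, by nlinarith, fun h => ?_, fun h => ?_⟩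
  · have he : e < a := by
      rcases hea.lt_or_eq with h' | h'
      · exact h'
      · have := hde h'
        omega
    have := h3 he
    subst h
    push_cast
    nlinarith
  · have h' : d + 1 ≤ (a : ℤ) := h
    have : (d : ℝ) + 1 ≤ a := by exact_mod_cast h'
    nlinarith

lemma window_of_admissible {a : ℕ} (ha : 1 ≤ a) (n : ℕ) (b : ℤ → ℤ) (hb : AdmissibleOn a 0 n b) :
    ∃ x', IsGalConj a (digitSum a n b) x' ∧ -1 < x' ∧ x' < theta a ∧
      (b 0 = a → theta a - 1 < x') ∧ (b 0 < a → x' < theta a - 1) := by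
  have hθ := theta_gt_one ha
  induction n generalizing b with
  | zero =>
    have hw := window_step ha (d := b 0) (e := 0) (y' := 0) (hb.2.1 0).1 (hb.2.1 0).2 (by omega)
      (by omega) (by norm_num) (by linarith) (by intro; linarith)
    simp only [mul_zero, add_zero] at hw
    exact ⟨b 0, by simpa [digitSum] using IsGalConj.intCast a (b 0), hw⟩
  | succ n ih =>
    obtain ⟨hb1, hb2, hb3⟩ := hb
    set c : ℤ → ℤ := fun i => if i < 0 then 0 else b (i + 1) with hc
    have hcb : ∀ i : ℤ, 0 ≤ i → c i = b (i + 1) := fun i hi => if_neg (by omega)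
    have hcneg : ∀ i : ℤ, i < 0 → c i = 0 := fun i hi => if_pos hi
    have hadm : AdmissibleOn a 0 n c := by
      refine ⟨fun i hi => ?_, fun i => ?_, fun i hi => ?_⟩
      · by_cases h : i < 0
        · exact absurd (hcneg i h) hi
        · rw [hcb i (by omega)] at hi
          have := hb1 _ hi
          push_cast at this
          omega
      · by_cases h : i < 0
        · rw [hcneg i h]
          omega
        · rw [hcb i (by omega)]
          exact hb2 _
      · by_cases h : i - 1 < 0
        · exact hcneg _ h
        · rw [hcb i (by omega)] at hi
          rw [hcb _ (by omega)]
          have := hb3 _ hi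
          rwa [show i + 1 - 1 = i - 1 + 1 by ring] at this
    obtain ⟨y', hy, h1, h2, -, h4⟩ := ih c hadm
    refine ⟨b 0 + thetaConj a * y', ?_, ?_⟩
    · rw [digitSum_succ a n b c fun i => hcb i (by omega)]
      exact (IsGalConj.intCast a (b 0)).add hy.theta_mul
    · refine window_step ha (hb2 0).1 (hb2 0).2 (hadm.2.1 0).2 (fun h => ?_) h1 h2 h4
      rw [hcb 0 le_rfl] at h
      simpa using hb3 _ h

/-- The choice of the lowest digit `d`: the quotient `(x - d)/θ` stays nonnegative with conjugate in
the window, and a nonzero digit leaves a quotient whose conjugate is below `θ - 1`. -/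
lemma exists_digit_s5 {a : ℕ} (ha : 1 ≤ a) {x x' : ℝ} (hx : IsGalConj a x x') (h0 : 0 ≤ x)
    (h1 : -1 < x') (h2 : x' < theta a) :
    ∃ (d : ℤ) (y y' : ℝ), 0 ≤ d ∧ d ≤ a ∧ x = d + theta a * y ∧ IsGalConj a y y' ∧ 0 ≤ y ∧
      -1 < y' ∧ y' < theta a ∧ (d ≠ 0 → y' < theta a - 1) := by
  have hθ := theta_pos a
  have hgt := theta_gt a
  have hθ1 := theta_gt_one ha
  have hi : 0 < (theta a)⁻¹ := inv_pos.2 hθ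
  have hinv := theta_inv a
  have hm : (theta a)⁻¹ * theta a = 1 := inv_mul_cancel₀ hθ.ne'
  have hconj : ∀ z : ℝ, z / thetaConj a = -(theta a * z) := by
    intro z
    rw [thetaConj]
    field_simp
  by_cases hc : x' < (theta a)⁻¹
  · refine ⟨0, x / theta a, x' / thetaConj a, le_rfl, by omega, ?_, hx.div_theta, by positivity,
      ?_, ?_, by simp⟩
    · field_simp
      simp
    · rw [hconj]
      nlinarith
    · rw [hconj]
      nlinarith
  · push Not at hc
    -- `x' - 1/θ` is not an integer: otherwise `x = n - θ` with `n < θ`, which is negative.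
    set d : ℤ := ⌊x' - (theta a)⁻¹⌋ + 1 with hd
    have hf1 : (⌊x' - (theta a)⁻¹⌋ : ℝ) ≤ x' - (theta a)⁻¹ := Int.floor_le _
    have hf2 : x' - (theta a)⁻¹ < ⌊x' - (theta a)⁻¹⌋ + 1 := Int.lt_floor_add_one _
    have hf0 : 0 ≤ ⌊x' - (theta a)⁻¹⌋ := Int.floor_nonneg.2 (by linarith)
    have hfa : (⌊x' - (theta a)⁻¹⌋ : ℝ) < a := by linarith
    have hfa' : ⌊x' - (theta a)⁻¹⌋ < (a : ℤ) := by exact_mod_cast hfa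
    have hne : (⌊x' - (theta a)⁻¹⌋ : ℝ) ≠ x' - (theta a)⁻¹ := by
      intro h
      obtain ⟨p, q, rfl, hx'⟩ := hx
      rw [thetaConj_eq] at hx'
      have hq : q = -1 ∧ p + q * a = ⌊x' - (theta a)⁻¹⌋ - a := by
        have hq1 : q = -1 := by
          by_contra hq1
          refine ((theta_irrational ha).intCast_mul (m := q + 1) (by omega)).ne_int
            (p + q * a - (⌊x' - (theta a)⁻¹⌋ - a)) ?_
          push_cast
          linarith
        refine ⟨hq1, ?_⟩
        subst hq1
        have : ((p + (-1) * a : ℤ) : ℝ) = ((⌊x' - (theta a)⁻¹⌋ - a : ℤ) : ℝ) := by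
          push_cast at hx' ⊢
          linarith
        exact_mod_cast this
      obtain ⟨rfl, hp⟩ := hq
      have hp' : p < (a : ℤ) := by linarith
      have : (p : ℝ) < a := by exact_mod_cast hp'
      push_cast at h0
      linarith
    have hlt : (⌊x' - (theta a)⁻¹⌋ : ℝ) < x' - (theta a)⁻¹ := lt_of_le_of_ne hf1 hne
    have hdR : (d : ℝ) = ⌊x' - (theta a)⁻¹⌋ + 1 := by
      rw [hd]
      push_cast
      ring
    have hda : d ≤ (a : ℤ) := by omega
    have hdaR : (d : ℝ) ≤ a := by exact_mod_cast hda
    have hy : IsGalConj a ((x + -d) / theta a) ((x' + -d) / thetaConj a) :=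
      (hx.add (IsGalConj.intCast a d).neg).div_theta
    have hy1 : -1 < (x' + -d) / thetaConj a := by
      rw [hconj]
      nlinarith
    have hy2 : (x' + -d) / thetaConj a < theta a - 1 := by
      rw [hconj]
      nlinarith
    refine ⟨d, _, _, by omega, hda, ?_, hy, ?_, hy1, by linarith, fun _ => hy2⟩
    · field_simp
      ring
    · -- A negative quotient would be a rational integer in `(-1, 0)`.
      by_contra hneg
      push Not at hneg
      have hlow : -1 < (x + -d) / theta a := by
        rw [lt_div_iff₀ hθ]
        linarith
      obtain ⟨n, hn⟩ := hy.eq_intCast (by linarith) (by linarith)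
      rw [hn] at hneg hlow
      have : n < 0 := by exact_mod_cast hneg
      have : -1 < n := by exact_mod_cast hlow
      omega

/-- Every nonnegative element of `ℤ[θ]` with conjugate in `(-1, θ)` is an admissible sum. The
induction runs over the size of `x`, which each extracted digit divides by at least `θ`. -/
lemma exists_admissible {a : ℕ} (ha : 1 ≤ a) (N : ℕ) {x x' : ℝ} (hx : IsGalConj a x x') (h0 : 0 ≤ x)
    (h1 : -1 < x') (h2 : x' < theta a) (hN : x < theta a ^ N * (theta a)⁻¹) :
    ∃ (n : ℕ) (b : ℤ → ℤ), AdmissibleOn a 0 n b ∧ x = digitSum a n b := by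
  have hθ := theta_pos a
  have hθ1 := theta_gt_one ha
  have hi : 0 < (theta a)⁻¹ := inv_pos.2 hθ
  have hi1 : (theta a)⁻¹ < 1 := inv_lt_one_of_one_lt₀ hθ1
  induction N generalizing x x' with
  | zero =>
    simp only [pow_zero, one_mul] at hN
    obtain ⟨n, rfl⟩ := hx.eq_intCast (by linarith) (by linarith)
    have hn0 : 0 ≤ n := by exact_mod_cast h0
    have hn1 : n < 1 := by exact_mod_cast hN.trans hi1
    have : n = 0 := by omega
    subst this
    refine ⟨0, fun _ => 0, ⟨by simp, fun i => by simp, by simp⟩, by simp [digitSum]⟩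
  | succ N ih =>
    obtain ⟨d, y, y', hd0, hda, rfl, hy, hy0, hy1, hy2, hy3⟩ := exists_digit_s5 ha hx h0 h1 h2
    have hyN : y < theta a ^ N * (theta a)⁻¹ := by
      have hd0' : (0 : ℝ) ≤ d := by exact_mod_cast hd0
      have : theta a * y < theta a * (theta a ^ N * (theta a)⁻¹) := by
        rw [pow_succ] at hN
        nlinarith
      exact lt_of_mul_lt_mul_left this hθ.le
    obtain ⟨n, c, hc, rfl⟩ := ih hy hy0 hy1 hy2 hyN
    -- The conjugate bound below `θ - 1` rules out the forbidden pair of digits.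
    have hdc : c 0 = a → d = 0 := by
      intro hca
      by_contra hd
      obtain ⟨z', hz, -, -, hz3, -⟩ := window_of_admissible ha n c hc
      have := hy.unique ha hz
      have := hz3 hca
      have := hy3 hd
      linarith
    obtain ⟨hc1, hc2, hc3⟩ := hc
    set b : ℤ → ℤ := fun i => if i = 0 then d else c (i - 1) with hb
    have hbs : ∀ i : ℤ, i ≠ 0 → b i = c (i - 1) := fun i h => if_neg h
    have hbz : b 0 = d := if_pos rfl
    have hcneg : ∀ i : ℤ, i < 0 → c i = 0 := fun i h => by
      by_contra h'
      have := hc1 i h'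
      omega
    refine ⟨n + 1, b, ⟨fun i h => ?_, fun i => ?_, fun i h => ?_⟩, ?_⟩
    · by_cases hi0 : i = 0
      · subst hi0
        exact ⟨le_rfl, by positivity⟩
      · rw [hbs i hi0] at h
        have := hc1 _ h
        push_cast
        omega
    · by_cases hi0 : i = 0
      · subst hi0
        rw [hbz]
        exact ⟨hd0, hda⟩
      · rw [hbs i hi0]
        exact hc2 _
    · by_cases hi0 : i = 0
      · subst hi0
        rw [hbs _ (by omega)]
        exact hcneg _ (by omega)
      · rw [hbs i hi0] at h
        by_cases hi1 : i = 1
        · subst hi1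
          rw [show (1 : ℤ) - 1 = 0 by norm_num] at h ⊢
          rw [hbz]
          exact hdc h
        · rw [hbs _ (by omega)]
          exact hc3 _ h
    · rw [digitSum_succ a n b c, hbz]
      intro i
      rw [hbs _ (by omega)]
      simp

/-! ### The θ-integers as a cut-and-project set -/

lemma mem_Ztheta_iff {a : ℕ} (ha : 1 ≤ a) {x x' : ℝ} (hx : IsGalConj a x x') :
    x ∈ Ztheta a ↔
      (0 ≤ x ∧ -1 < x' ∧ x' < theta a) ∨ (x ≤ 0 ∧ -theta a < x' ∧ x' < 1) := by
  have hex : ∀ {y y' : ℝ}, IsGalConj a y y' → 0 ≤ y → -1 < y' → y' < theta a →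
      ∃ (n : ℕ) (b : ℤ → ℤ), AdmissibleOn a 0 n b ∧ y = digitSum a n b := by
    intro y y' hy h0 h1 h2
    obtain ⟨N, hN⟩ := pow_unbounded_of_one_lt (y * theta a) (theta_gt_one ha)
    refine exists_admissible ha N hy h0 h1 h2 ?_
    rwa [← div_eq_mul_inv, lt_div_iff₀ (theta_pos a)]
  constructor
  · rintro ⟨ε, M, b, hε, hM, hb, hsum⟩
    obtain ⟨n, rfl⟩ := Int.eq_ofNat_of_zero_le hM
    rw [sum_Icc_eq_digitSum] at hsum
    have hnn := digitSum_nonneg hb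
    obtain ⟨z', hz, h1, h2, -, -⟩ := window_of_admissible ha n b hb
    rcases hε with rfl | rfl
    · left
      simp only [Int.cast_one, one_mul] at hsum
      subst hsum
      rw [hx.unique ha hz]
      exact ⟨hnn, h1, h2⟩
    · right
      simp only [Int.cast_neg, Int.cast_one, neg_mul, one_mul] at hsum
      subst hsum
      rw [hx.unique ha hz.neg]
      exact ⟨by linarith, by linarith, by linarith⟩
  · rintro (⟨h0, h1, h2⟩ | ⟨h0, h1, h2⟩)
    · obtain ⟨n, b, hb, h⟩ := hex hx h0 h1 h2
      refine ⟨1, n, b, Or.inl rfl, by omega, hb, ?_⟩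
      rw [sum_Icc_eq_digitSum, h]
      simp
    · obtain ⟨n, b, hb, h⟩ := hex hx.neg (by linarith) (by linarith) (by linarith)
      refine ⟨-1, n, b, Or.inr rfl, by omega, hb, ?_⟩
      rw [sum_Icc_eq_digitSum, ← h]
      simp

/-- The sum of two θ-integers lies in `θ⁻² ℤ_θ`. -/
lemma add_mem_Ztheta {a : ℕ} (ha : 1 ≤ a) {x x' y y' : ℝ} (hx : IsGalConj a x x')
    (hy : IsGalConj a y y') (hxm : x ∈ Ztheta a) (hym : y ∈ Ztheta a) :
    theta a * (theta a * (x + y)) ∈ Ztheta a := by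
  have hθ := theta_pos a
  have hθ1 := theta_gt_one ha
  have haR : (1 : ℝ) ≤ a := by exact_mod_cast ha
  have hsq := theta_sq a
  have hge : theta a + 1 ≤ theta a ^ 2 := by nlinarith
  have hz := (hx.add hy).theta_mul.theta_mul
  rw [mem_Ztheta_iff ha hx] at hxm
  rw [mem_Ztheta_iff ha hy] at hym
  rw [mem_Ztheta_iff ha hz]
  set w : ℝ := thetaConj a * (thetaConj a * (x' + y')) with hw
  have hwe : theta a ^ 2 * w = x' + y' := by
    rw [hw, thetaConj]
    field_simp
  have hs : ∀ z : ℝ, 0 ≤ z → 0 ≤ theta a * (theta a * z) := fun z h => by positivity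
  have hs' : ∀ z : ℝ, z ≤ 0 → theta a * (theta a * z) ≤ 0 := fun z h => by
    have := hs (-z) (by linarith)
    linarith
  -- Strict bounds on `w`, obtained after clearing the factor `θ²`.
  have hlt : ∀ t : ℝ, x' + y' < theta a ^ 2 * t → w < t := fun t h =>
    lt_of_mul_lt_mul_left (by rwa [hwe]) (by positivity)
  have hgt : ∀ t : ℝ, theta a ^ 2 * t < x' + y' → t < w := fun t h =>
    lt_of_mul_lt_mul_left (by rwa [hwe]) (by positivity)
  have hcube : 2 * theta a ≤ theta a ^ 2 * theta a := by nlinarith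
  rcases hxm with ⟨hx0, hx1, hx2⟩ | ⟨hx0, hx1, hx2⟩ <;>
    rcases hym with ⟨hy0, hy1, hy2⟩ | ⟨hy0, hy1, hy2⟩
  · exact Or.inl ⟨hs _ (by linarith), hgt _ (by linarith), hlt _ (by linarith)⟩
  · rcases le_total 0 (x + y) with h | h
    · exact Or.inl ⟨hs _ h, hgt _ (by linarith), hlt _ (by nlinarith)⟩
    · exact Or.inr ⟨hs' _ h, hgt _ (by nlinarith), hlt _ (by linarith)⟩
  · rcases le_total 0 (x + y) with h | h
    · exact Or.inl ⟨hs _ h, hgt _ (by linarith), hlt _ (by nlinarith)⟩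
    · exact Or.inr ⟨hs' _ h, hgt _ (by nlinarith), hlt _ (by linarith)⟩
  · exact Or.inr ⟨hs' _ (by linarith), hgt _ (by linarith), hlt _ (by linarith)⟩

/-! ### The valuation `v` -/

lemma abs_div_thetaConj_zpow (a : ℕ) (x' : ℝ) (k : ℤ) :
    |x' / thetaConj a ^ k| = |x'| * theta a ^ k := by
  rw [abs_div, abs_zpow, thetaConj, abs_neg, abs_inv, abs_of_pos (theta_pos a), inv_zpow,
    div_inv_eq_mul]

lemma mem_of_le {a : ℕ} (ha : 1 ≤ a) {x x' : ℝ} (hx : IsGalConj a x x') {k l : ℤ} (hkl : k ≤ l)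
    (h : x / theta a ^ l ∈ Ztheta a) : x / theta a ^ k ∈ Ztheta a := by
  have hθ := theta_pos a
  have hθ1 := theta_gt_one ha
  rcases hkl.eq_or_lt with rfl | hlt
  · exact h
  rw [mem_Ztheta_iff ha (hx.div_zpow _)] at h ⊢
  have habs : |x' / thetaConj a ^ l| < theta a := by
    rw [abs_lt]
    rcases h with ⟨-, h1, h2⟩ | ⟨-, h1, h2⟩ <;> constructor <;> linarith
  have hk : |x' / thetaConj a ^ k| < 1 := by
    rw [abs_div_thetaConj_zpow] at habs ⊢
    have h1 : |x'| * theta a ^ (k + 1) ≤ |x'| * theta a ^ l :=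
      mul_le_mul_of_nonneg_left (zpow_le_zpow_right₀ hθ1.le (by omega)) (abs_nonneg _)
    rw [zpow_add_one₀ hθ.ne', ← mul_assoc] at h1
    by_contra hcon
    push Not at hcon
    nlinarith
  rw [abs_lt] at hk
  rcases le_total 0 x with h0 | h0
  · exact Or.inl ⟨by positivity, hk.1, by linarith⟩
  · exact Or.inr ⟨div_nonpos_of_nonpos_of_nonneg h0 (by positivity), by linarith, hk.2⟩

/-- For nonzero `x ∈ ℤ[θ]`, the supremum defining `v(x)` is a maximum. -/
lemma vval_spec {a : ℕ} (ha : 1 ≤ a) {x x' : ℝ} (hx : IsGalConj a x x') (hne : x ≠ 0) :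
    IsGreatest {k : ℤ | x / theta a ^ k ∈ Ztheta a} (vval a x) := by
  have hθ := theta_pos a
  have hθ1 := theta_gt_one ha
  have hx' : 0 < |x'| := abs_pos.2 (hx.ne_zero ha hne)
  have hbdd : BddAbove {k : ℤ | x / theta a ^ k ∈ Ztheta a} := by
    obtain ⟨N, hN⟩ := pow_unbounded_of_one_lt (theta a / |x'|) hθ1
    refine ⟨N, fun k hk => ?_⟩
    rw [Set.mem_ofPred_eq, mem_Ztheta_iff ha (hx.div_zpow _)] at hk
    have habs : |x' / thetaConj a ^ k| < theta a := by
      rw [abs_lt]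
      rcases hk with ⟨-, h1, h2⟩ | ⟨-, h1, h2⟩ <;> constructor <;> linarith
    rw [abs_div_thetaConj_zpow, mul_comm, ← lt_div_iff₀ hx'] at habs
    have := habs.trans hN
    rw [← zpow_natCast] at this
    exact ((zpow_lt_zpow_iff_right₀ hθ1).1 this).le
  have hnon : {k : ℤ | x / theta a ^ k ∈ Ztheta a}.Nonempty := by
    obtain ⟨N, hN⟩ := pow_unbounded_of_one_lt |x'| hθ1
    refine ⟨-N, ?_⟩
    rw [Set.mem_ofPred_eq, mem_Ztheta_iff ha (hx.div_zpow _)]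
    have hk : |x' / thetaConj a ^ (-N : ℤ)| < 1 := by
      rw [abs_div_thetaConj_zpow, zpow_neg, zpow_natCast, ← div_eq_mul_inv,
        div_lt_one (by positivity)]
      exact hN
    rw [abs_lt] at hk
    rcases le_total 0 x with h0 | h0
    · exact Or.inl ⟨by positivity, hk.1, by linarith⟩
    · exact Or.inr ⟨div_nonpos_of_nonpos_of_nonneg h0 (by positivity), by linarith, hk.2⟩
  exact ⟨Int.csSup_mem hnon hbdd, fun k hk => le_csSup hbdd hk⟩

/-- Reverse infratriangle inequality, norm `−1` case. Let `α, β ∈ ℤ[θ]` with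
`α ≠ 0`. If `θ²·|β|_θ < |α|_θ`, then `|α|_θ − |β|_θ ≤ |α|_θ ≤ θ²·|α − β|_θ`. -/
theorem reverse_infratriangle_neg_one (a : ℕ) (ha : 1 ≤ a) (α β : ℝ)
    (hα : inOK a α) (hβ : inOK a β) (hne : α ≠ 0)
    (h : theta a ^ 2 * thNorm a β < thNorm a α) :
    thNorm a α - thNorm a β ≤ thNorm a α ∧
    thNorm a α ≤ theta a ^ 2 * thNorm a (α - β) := by
  have hθ := theta_pos a
  have hθ1 := theta_gt_one ha
  have hnonneg : ∀ x, 0 ≤ thNorm a x := by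
    intro x
    unfold thNorm
    split_ifs <;> positivity
  refine ⟨by linarith [hnonneg β], ?_⟩
  have hsq1 : 1 ≤ theta a ^ 2 := one_le_pow₀ hθ1.le
  by_cases hβ0 : β = 0
  · subst hβ0
    rw [sub_zero]
    nlinarith [hnonneg α]
  by_cases hαβ : α - β = 0
  · have : α = β := by linarith
    subst this
    nlinarith [hnonneg α]
  obtain ⟨p, q, hpq⟩ := hα
  obtain ⟨r, s, hrs⟩ := hβ
  have hα : IsGalConj a α (p + q * thetaConj a) := ⟨p, q, hpq, rfl⟩
  have hβ : IsGalConj a β (r + s * thetaConj a) := ⟨r, s, hrs, rfl⟩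
  have hγ := hα.add hβ.neg
  rw [← sub_eq_add_neg α β] at hγ
  have e2 : ∀ k : ℤ, theta a ^ 2 * theta a ^ k = theta a ^ (2 + k) := by
    intro k
    rw [zpow_add₀ hθ.ne']
    norm_cast
  simp only [thNorm, if_neg hne, if_neg hβ0, if_neg hαβ, e2] at h ⊢
  rw [zpow_lt_zpow_iff_right₀ hθ1] at h
  rw [zpow_le_zpow_iff_right₀ hθ1]
  by_contra hcon
  set m := vval a α with hm
  have h1 : β / theta a ^ (m + 3) ∈ Ztheta a :=
    mem_of_le ha hβ (by omega) (vval_spec ha hβ hβ0).1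
  have h2 : (α - β) / theta a ^ (m + 3) ∈ Ztheta a :=
    mem_of_le ha hγ (by omega) (vval_spec ha hγ hαβ).1
  have h3 := add_mem_Ztheta ha (hβ.div_zpow _) (hγ.div_zpow _) h1 h2
  have h4 : theta a * (theta a * (β / theta a ^ (m + 3) + (α - β) / theta a ^ (m + 3)))
      = α / theta a ^ (m + 1) := by
    rw [show m + 3 = m + 1 + 1 + 1 by ring, zpow_add_one₀ hθ.ne' (m + 1 + 1),
      zpow_add_one₀ hθ.ne' (m + 1)]
    field_simp
    ring
  rw [h4] at h3
  have := (vval_spec ha hα hne).2 h3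
  omega
end
end
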